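/- Let k be a perfect field and A a finite-dimensional associative unital k-algebra. Then A is a semisimple ring if and only if A admits a normalized nearly Frobenius coproduct (equivalently, if and only if A is separable over k; equivalently, if and only if the enveloping algebra A ⊗[k] Aᵐᵒᵖ is a semisimple ring). -/

import Mathlib

open TensorProduct

/-- A nearly Frobenius coproduct on a `k`-algebra `A`. -/
def IsNearlyFrobenius (k A : Type*) [Field k] [Ring A] [Algebra k A]
    (Δ : A →ₗ[k] A ⊗[k] A) : Prop :=
  ∀ a b : A, Δ (a * b) = (a ⊗ₜ[k] (1 : A)) * Δ b ∧ Δ (a * b) = Δ a * ((1 : A) ⊗ₜ[k] b)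

lemma ss_sq {A : Type*} [Ring A] [IsSemisimpleRing A] (u : A) (h : ∀ a : A, ∃ n : ℕ, (a * u)^n = 0) :
    u = 0 := by
  obtain ⟨g, hg, hs⟩ := IsSemisimpleRing.ideal_eq_span_idempotent (Ideal.span {u})
  have h1 : g ∈ Ideal.span {u} := hs ▸ Ideal.subset_span rfl
  obtain ⟨a, rfl⟩ := Ideal.mem_span_singleton'.1 h1
  obtain ⟨n, hn⟩ := h a
  have h0 : a * u = 0 := by
    have := hg.pow_succ_eq n
    rw [← this, pow_succ, hn, zero_mul]
  have h2 : u ∈ Ideal.span {a * u} := hs ▸ Ideal.subset_span rfl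
  simpa [h0] using h2

lemma exists_central {A : Type*} [Ring A] [IsSemisimpleRing A] (L : Ideal A)
    (hr : ∀ x ∈ L, ∀ r, x * r ∈ L) (hL : L ≠ ⊥) : ∃ z ∈ L, z ≠ 0 ∧ ∀ d, d * z = z * d := by
  obtain ⟨f, hf, rfl⟩ := IsSemisimpleRing.ideal_eq_span_idempotent L
  have hfL : f ∈ Ideal.span {f} := Ideal.subset_span rfl
  have key : ∀ d, f * d * f = f * d := by
    intro d
    obtain ⟨a, ha⟩ := Ideal.mem_span_singleton'.1 (hr f hfL d)
    rw [← ha, mul_assoc, hf.eq]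
  refine ⟨f, hfL, fun h => hL (by simp [h]), fun d => ?_⟩
  have : d * f - f * d * f = 0 := by
    apply ss_sq
    intro a
    refine ⟨2, ?_⟩
    have e1 : f * (a * (d * f - f * d * f)) = 0 := by
      have h1 := key (a * d)
      have h2 : f * a * (f * d * f) = f * (a * d) * f := by
        calc f * a * (f * d * f) = (f * a * f) * d * f := by simp only [mul_assoc]
          _ = _ := by rw [key]; simp only [mul_assoc]
      rw [← mul_assoc, mul_sub, h2]; simp only [mul_assoc, sub_self]
    have e2 : a * (d * f - f * d * f) = a * (d - f * d) * f := by
      simp only [mul_sub, sub_mul, mul_assoc]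
    rw [pow_two]
    nth_rw 1 [e2]
    rw [mul_assoc, e1, mul_zero]
  rw [sub_eq_zero.1 this, key]

def NilFree (R : Type*) [Ring R] : Prop :=
  ∀ I : Ideal R, (∀ x ∈ I, ∀ r, x * r ∈ I) → (∀ x ∈ I, IsNilpotent x) → ∀ x ∈ I, x = 0

lemma NilFree.of_equiv {R S : Type*} [Ring R] [Ring S] (e : R ≃+* S) (h : NilFree R) : NilFree S := by
  intro I hr hn x hx
  have := h (I.comap (e : R →+* S)) (fun x hx r => by
      simp only [Ideal.mem_comap, map_mul] at hx ⊢; exact hr _ hx _)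
    (fun x hx => by
      have := hn _ (Ideal.mem_comap.1 hx)
      exact (IsNilpotent.map_iff (f := (e : R →+* S)) e.injective).1 this) (e.symm x)
    (by rw [Ideal.mem_comap]; show e (e.symm x) ∈ I; rwa [e.apply_symm_apply])
  simpa using this

lemma NilFree.of_isReduced (R : Type*) [CommRing R] [IsReduced R] : NilFree R :=
  fun _ _ hn x hx => (hn x hx).eq_zero

lemma nilFree_semisimple (R : Type*) [Ring R] [IsArtinianRing R] (h : NilFree R) :
    IsSemisimpleRing R := by
  rw [IsArtinianRing.isSemisimpleRing_iff_jacobson, eq_bot_iff]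
  intro x hx
  obtain ⟨n, hn⟩ := IsSemiprimaryRing.isNilpotent (R := R)
  refine h (Ring.jacobson R) (fun x hx r => Ideal.mul_mem_right _ _ hx) (fun x hx => ⟨n, ?_⟩) x hx
  have := Ideal.pow_mem_pow hx n
  rw [hn] at this
  simpa using this

set_option maxHeartbeats 1000000 in
lemma NilFree.tensor (k A R : Type*) [Field k] [Ring A] [Algebra k A] [Ring R] [Algebra k R]
    [IsSemisimpleRing A] (h : NilFree (Subalgebra.center k A ⊗[k] R)) : NilFree (A ⊗[k] R) := by
  classical
  intro I hr hn
  by_contra! hne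
  let c := Module.Basis.ofVectorSpace k R
  let φ := TensorProduct.equivFinsuppOfBasisRight (M := A) c
  have φl : ∀ (a : A) (x : A ⊗[k] R) i, φ ((a ⊗ₜ 1) * x) i = a * φ x i := by
    intro a x i
    induction x using TensorProduct.induction_on with
    | zero => simp
    | tmul b r => simp [φ, Algebra.TensorProduct.tmul_mul_tmul]
    | add x y hx hy => simp [mul_add, hx, hy]
  have φr : ∀ (a : A) (x : A ⊗[k] R) i, φ (x * (a ⊗ₜ 1)) i = φ x i * a := by
    intro a x i
    induction x using TensorProduct.induction_on with
    | zero => simp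
    | tmul b r => simp [φ, Algebra.TensorProduct.tmul_mul_tmul]
    | add x y hx hy => simp [add_mul, hx, hy]
  have hex : ∃ n : ℕ, ∃ x ∈ I, x ≠ 0 ∧ (φ x).support.card = n := by
    obtain ⟨x, hx, h0⟩ := hne
    exact ⟨_, x, hx, h0, rfl⟩
  obtain ⟨x, hx, hx0, hcard⟩ := Nat.find_spec hex
  have hmin : ∀ y ∈ I, (φ y).support.card < (φ x).support.card → y = 0 := by
    intro y hy hlt
    by_contra hy0
    rw [hcard] at hlt
    exact Nat.find_min hex hlt ⟨y, hy, hy0, rfl⟩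
  have hφx : φ x ≠ 0 := by simpa using hx0
  obtain ⟨i0, hi0⟩ := Finsupp.support_nonempty_iff.2 hφx
  let L : Ideal A :=
    { carrier := {a | ∃ y ∈ I, (φ y).support ⊆ (φ x).support ∧ φ y i0 = a}
      zero_mem' := ⟨0, I.zero_mem, by simp, by simp⟩
      add_mem' := by
        rintro a b ⟨y, hy, hs, rfl⟩ ⟨z, hz, hs', rfl⟩
        refine ⟨y + z, I.add_mem hy hz, ?_, by simp⟩
        rw [map_add]
        exact Finsupp.support_add.trans (Finset.union_subset hs hs')
      smul_mem' := by
        rintro a b ⟨y, hy, hs, rfl⟩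
        refine ⟨(a ⊗ₜ 1) * y, I.mul_mem_left _ hy, ?_, φl _ _ _⟩
        intro i hi
        apply hs
        rw [Finsupp.mem_support_iff, φl] at hi
        rw [Finsupp.mem_support_iff]
        exact right_ne_zero_of_mul hi }
  have hLr : ∀ x ∈ L, ∀ r, x * r ∈ L := by
    rintro a ⟨y, hy, hs, rfl⟩ b
    refine ⟨y * (b ⊗ₜ 1), hr _ hy _, ?_, φr _ _ _⟩
    intro i hi
    apply hs
    rw [Finsupp.mem_support_iff, φr] at hi
    rw [Finsupp.mem_support_iff]
    exact left_ne_zero_of_mul hi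
  have hL : L ≠ ⊥ := by
    intro h
    have : φ x i0 ∈ L := ⟨x, hx, subset_rfl, rfl⟩
    rw [h] at this
    exact (Finsupp.mem_support_iff.1 hi0) (by simpa using this)
  obtain ⟨z, ⟨y, hy, hs, hyz⟩, hz0, hz⟩ := exists_central L hLr hL
  have hcomm : ∀ i d, d * φ y i = φ y i * d := by
    intro i d
    have h0 : (d ⊗ₜ 1) * y - y * (d ⊗ₜ 1) = 0 := by
      apply hmin _ (I.sub_mem (I.mul_mem_left _ hy) (hr _ hy _))
      apply Finset.card_lt_card
      refine (Finset.ssubset_iff_of_subset ?_).2 ⟨i0, hi0, ?_⟩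
      · intro j hj
        apply hs
        rw [Finsupp.mem_support_iff, map_sub, Finsupp.sub_apply, φl, φr] at hj
        rw [Finsupp.mem_support_iff]
        intro h
        simp [h] at hj
      · rw [Finsupp.notMem_support_iff, map_sub, Finsupp.sub_apply, φl, φr, hyz, hz, sub_self]
    have := congrArg (fun t => φ t i) h0
    simp only [map_sub, Finsupp.sub_apply, φl, φr, map_zero, Finsupp.zero_apply] at this
    exact sub_eq_zero.1 this
  have hy0 : y ≠ 0 := by
    rintro rfl
    exact hz0 (by simpa using hyz.symm)
  let ψ : Subalgebra.center k A ⊗[k] R →ₐ[k] A ⊗[k] R :=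
    Algebra.TensorProduct.map (Subalgebra.center k A).val (AlgHom.id k R)
  have hψ : Function.Injective ψ := by
    have := Module.Flat.rTensor_preserves_injective_linearMap (M := R)
      (Subalgebra.center k A).val.toLinearMap Subtype.val_injective
    exact this
  let y' : Subalgebra.center k A ⊗[k] R :=
    ∑ i ∈ (φ y).support, (⟨φ y i, Subalgebra.mem_center_iff.2 (hcomm i)⟩ : Subalgebra.center k A) ⊗ₜ c i
  have hy' : ψ y' = y := by
    have : y = φ.symm (φ y) := by simp
    rw [this, TensorProduct.equivFinsuppOfBasisRight_symm_apply]
    simp [y', ψ, Finsupp.sum]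
  have := h (I.comap (ψ : _ →+* A ⊗[k] R)) (fun x hx r => by
      simp only [Ideal.mem_comap, map_mul] at hx ⊢; exact hr _ hx _)
    (fun x hx => (IsNilpotent.map_iff (f := ψ) hψ).1 (hn _ (Ideal.mem_comap.1 hx))) y'
    (by rw [Ideal.mem_comap]; show ψ y' ∈ I; rwa [hy'])
  exact hy0 (by rw [← hy', this, map_zero])

instance center_reduced (k A : Type*) [Field k] [Ring A] [Algebra k A]
    [IsSemisimpleRing A] : IsReduced (Subalgebra.center k A) := by
  constructor
  rintro ⟨z, hz⟩ ⟨n, hn⟩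
  rw [Subalgebra.mem_center_iff] at hz
  have hn' : z ^ n = 0 := congrArg Subtype.val hn
  have : z = 0 := by
    apply ss_sq
    intro a
    exact ⟨n, by rw [(show Commute a z from hz a).mul_pow, hn', mul_zero]⟩
  exact Subtype.ext this

attribute [local instance] Ideal.Quotient.field in
lemma unram (k A : Type*) [Field k] [PerfectField k] [CommRing A] [Algebra k A]
    [FiniteDimensional k A] [IsReduced A] : Algebra.FormallyUnramified k A := by
  have : IsArtinianRing A := .of_finite k A
  have (I : MaximalSpectrum A) : Algebra.FormallyUnramified k (A ⧸ I.asIdeal) := 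
    Algebra.FormallyUnramified.of_isSeparable _ _
  have : Algebra.FormallyUnramified k (∀ I : MaximalSpectrum A, A ⧸ I.asIdeal) := inferInstance
  exact .of_equiv ((IsArtinianRing.equivPi A).restrictScalars k).symm

lemma red (k A B : Type*) [Field k] [PerfectField k] [CommRing A] [Algebra k A]
    [FiniteDimensional k A] [IsReduced A] [CommRing B] [Algebra k B]
    [FiniteDimensional k B] [IsReduced B] : IsReduced (A ⊗[k] B) := by
  have := unram k A
  have := unram k B
  have : Algebra.FormallyUnramified k (A ⊗[k] B) := Algebra.FormallyUnramified.comp k A _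
  exact Algebra.FormallyUnramified.isReduced_of_field k _

lemma ss_env (k A : Type*) [Field k]
    [PerfectField k] [Ring A] [Algebra k A] [FiniteDimensional k A] [IsSemisimpleRing A] :
    IsSemisimpleRing (A ⊗[k] Aᵐᵒᵖ) := by
  have : IsArtinianRing (A ⊗[k] Aᵐᵒᵖ) := .of_finite k _
  apply nilFree_semisimple
  apply NilFree.tensor
  apply NilFree.of_equiv (Algebra.TensorProduct.comm k Aᵐᵒᵖ (Subalgebra.center k A)).toRingEquiv
  apply NilFree.tensor
  have := red k (Subalgebra.center k Aᵐᵒᵖ) (Subalgebra.center k A)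
  exact NilFree.of_isReduced (Subalgebra.center k Aᵐᵒᵖ ⊗[k] Subalgebra.center k A)

def IsSepElt (k A : Type*) [Field k] [Ring A] [Algebra k A] (e : A ⊗[k] A) : Prop :=
  LinearMap.mul' k A e = 1 ∧ ∀ a : A, (a ⊗ₜ[k] (1 : A)) * e = e * ((1 : A) ⊗ₜ[k] a)

lemma avg_proj (k A R : Type*) [Field k] [Ring A] [Algebra k A] [Ring R] [Algebra k R]
    (e : A ⊗[k] A) (he : IsSepElt k A e) (N : Ideal R) (g : A →ₐ[k] R) (p : R →ₗ[k] R)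
    (hpN : ∀ m, p m ∈ N) (hp1 : ∀ n ∈ N, p n = n) :
    ∃ p' : R →ₗ[k] R, (∀ m, p' m ∈ N) ∧ (∀ n ∈ N, p' n = n) ∧
      (∀ a m, p' (g a * m) = g a * p' m) ∧
      ∀ h : R, (∀ a, h * g a = g a * h) → (∀ m, p (h * m) = h * p m) →
        ∀ m, p' (h * m) = h * p' m := by
  let G : A →ₐ[k] Module.End k R := (Algebra.lmul k R).comp g
  have hG : ∀ a m, G a m = g a * m := fun a m => rfl
  let T : A ⊗[k] A →ₗ[k] Module.End k R := TensorProduct.lift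
    ((LinearMap.mul k (Module.End k R)).compl₁₂
      (LinearMap.mulRight k p ∘ₗ G.toLinearMap) G.toLinearMap)
  have hT : ∀ x y m, T (x ⊗ₜ y) m = g x * p (g y * m) := fun x y m => by
    simp [T, hG]
  have h1 : ∀ a t m, T ((a ⊗ₜ 1) * t) m = g a * T t m := by
    intro a t m
    induction t using TensorProduct.induction_on with
    | zero => simp
    | tmul x y => simp [hT, Algebra.TensorProduct.tmul_mul_tmul, mul_assoc]
    | add x y hx hy => simp [mul_add, hx, hy]
  have h2 : ∀ a t m, T (t * (1 ⊗ₜ a)) m = T t (g a * m) := by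
    intro a t m
    induction t using TensorProduct.induction_on with
    | zero => simp
    | tmul x y => simp [hT, Algebra.TensorProduct.tmul_mul_tmul, mul_assoc]
    | add x y hx hy => simp [add_mul, hx, hy]
  refine ⟨T e, ?_, ?_, ?_, ?_⟩
  · intro m
    generalize e = t
    induction t using TensorProduct.induction_on with
    | zero => simp
    | tmul x y => rw [hT]; exact N.mul_mem_left _ (hpN _)
    | add x y hx hy => simpa using N.add_mem hx hy
  · intro n hn
    have : ∀ t, T t n = g (LinearMap.mul' k A t) * n := by
      intro t
      induction t using TensorProduct.induction_on with
      | zero => simp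
      | tmul x y => rw [hT, hp1 _ (N.mul_mem_left _ hn)]; simp [mul_assoc]
      | add x y hx hy => simp [hx, hy, add_mul]
    rw [this, he.1, map_one, one_mul]
  · intro a m
    rw [← h1, he.2, h2]
  · intro h hg hp m
    generalize e = t
    induction t using TensorProduct.induction_on with
    | zero => simp
    | tmul x y => rw [hT, hT, ← mul_assoc, ← hg, mul_assoc, hp, ← mul_assoc, ← hg, mul_assoc]
    | add x y hx hy => simp [hx, hy, mul_add]

lemma ss_of_proj (k R : Type*) [Field k] [Ring R] [Algebra k R]
    (H : ∀ (N : Ideal R) (p : R →ₗ[k] R), (∀ m, p m ∈ N) → (∀ n ∈ N, p n = n) →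
      ∃ p' : R →ₗ[k] R, (∀ m, p' m ∈ N) ∧ (∀ n ∈ N, p' n = n) ∧
      (∀ r m, p' (r * m) = r * p' m)) : IsSemisimpleRing R := by
  refine (isSemisimpleModule_iff R R).2 ⟨fun N => ?_⟩
  obtain ⟨q, hq⟩ := (N.restrictScalars k).subtype.exists_leftInverse_of_injective
    (Submodule.ker_subtype _)
  obtain ⟨p', h1, h2, h3⟩ := H N ((N.restrictScalars k).subtype ∘ₗ q) (fun m => (q m).2)
    (fun n hn => congrArg Subtype.val (LinearMap.congr_fun hq ⟨n, hn⟩))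
  let P : R →ₗ[R] N :=
    { toFun := fun m => ⟨p' m, h1 m⟩
      map_add' := fun x y => Subtype.ext (map_add p' x y)
      map_smul' := fun r x => Subtype.ext (h3 r x) }
  exact ⟨_, LinearMap.isCompl_of_proj (f := P) (fun x => Subtype.ext (h2 x x.2))⟩

lemma ss_of_sep (k A : Type*) [Field k] [Ring A] [Algebra k A] (e : A ⊗[k] A)
    (he : IsSepElt k A e) : IsSemisimpleRing A := by
  apply ss_of_proj k
  intro N p h1 h2
  obtain ⟨p', a, b, c, -⟩ := avg_proj k A A e he N (AlgHom.id k A) p h1 h2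
  exact ⟨p', a, b, c⟩

lemma sep_of_env (k A : Type*) [Field k] [Ring A] [Algebra k A] [IsSemisimpleRing (A ⊗[k] Aᵐᵒᵖ)] :
    ∃ e, IsSepElt k A e := by
  let θ : A ⊗[k] Aᵐᵒᵖ →ₗ[k] A ⊗[k] A :=
    LinearMap.lTensor A (MulOpposite.opLinearEquiv k).symm.toLinearMap
  have θt : ∀ x y, θ (x ⊗ₜ MulOpposite.op y) = x ⊗ₜ y := fun x y => by simp [θ]
  let μ : A ⊗[k] Aᵐᵒᵖ →ₗ[k] A := LinearMap.mul' k A ∘ₗ θ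
  have μt : ∀ x y, μ (x ⊗ₜ MulOpposite.op y) = x * y := fun x y => by simp [μ, θt]
  have hμ : ∀ a b s, μ ((a ⊗ₜ MulOpposite.op b) * s) = a * μ s * b := by
    intro a b s
    induction s using TensorProduct.induction_on with
    | zero => simp
    | tmul x y =>
      induction y using MulOpposite.rec' with
      | _ y => rw [Algebra.TensorProduct.tmul_mul_tmul, ← MulOpposite.op_mul, μt, μt]; simp [mul_assoc]
    | add x y hx hy => simp [mul_add, add_mul, hx, hy]
  have hθ1 : ∀ a s, θ ((a ⊗ₜ 1) * s) = (a ⊗ₜ 1) * θ s := by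
    intro a s
    induction s using TensorProduct.induction_on with
    | zero => simp
    | tmul x y =>
      induction y using MulOpposite.rec' with
      | _ y => rw [Algebra.TensorProduct.tmul_mul_tmul, one_mul, θt, θt,
                Algebra.TensorProduct.tmul_mul_tmul, one_mul]
    | add x y hx hy => simp [mul_add, hx, hy]
  have hθ2 : ∀ a s, θ ((1 ⊗ₜ MulOpposite.op a) * s) = θ s * (1 ⊗ₜ a) := by
    intro a s
    induction s using TensorProduct.induction_on with
    | zero => simp
    | tmul x y =>
      induction y using MulOpposite.rec' with
      | _ y => rw [Algebra.TensorProduct.tmul_mul_tmul, one_mul, ← MulOpposite.op_mul, θt, θt,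
                Algebra.TensorProduct.tmul_mul_tmul, mul_one]
    | add x y hx hy => simp [mul_add, add_mul, hx, hy]
  let K : Ideal (A ⊗[k] Aᵐᵒᵖ) :=
    { carrier := {s | μ s = 0}
      zero_mem' := map_zero μ
      add_mem' := fun {a b} ha hb => by
        simp only [Set.mem_ofPred_eq] at ha hb ⊢
        rw [map_add, ha, hb, add_zero]
      smul_mem' := fun r s hs => by
        simp only [Set.mem_ofPred_eq, smul_eq_mul] at hs ⊢
        induction r using TensorProduct.induction_on with
        | zero => simp
        | tmul x y =>
          induction y using MulOpposite.rec' with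
          | _ y => rw [hμ, hs]; simp
        | add x y hx hy => rw [add_mul, map_add, hx, hy, add_zero] }
  obtain ⟨f, hf, hK⟩ := IsSemisimpleRing.ideal_eq_span_idempotent K
  have hfK : μ f = 0 := by
    have : f ∈ K := hK ▸ Ideal.subset_span rfl
    exact this
  have hz : ∀ s, μ s = 0 → s * (1 - f) = 0 := by
    intro s hs
    have : s ∈ K := hs
    rw [hK] at this
    obtain ⟨a, rfl⟩ := Ideal.mem_span_singleton'.1 this
    rw [mul_assoc, mul_sub, mul_one, hf.eq, sub_self, mul_zero]
  refine ⟨θ (1 - f), ?_, fun a => ?_⟩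
  · show μ (1 - f) = 1
    rw [map_sub, hfK, sub_zero, Algebra.TensorProduct.one_def, ← MulOpposite.op_one, μt, one_mul]
  · rw [← hθ1, ← hθ2]
    have := hz (a ⊗ₜ 1 - 1 ⊗ₜ MulOpposite.op a) (by
      rw [map_sub, ← MulOpposite.op_one, μt, μt, one_mul, mul_one, sub_self])
    rw [sub_mul] at this
    rw [sub_eq_zero.1 this]

theorem semisimple_iff_normalized_of_perfectField (k A : Type*) [Field k]
    [PerfectField k] [Ring A] [Algebra k A] [FiniteDimensional k A] :
    (IsSemisimpleRing A ↔
      ∃ Δ : A →ₗ[k] A ⊗[k] A, IsNearlyFrobenius k A Δ ∧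
        LinearMap.mul' k A ∘ₗ Δ = LinearMap.id) ∧
    (IsSemisimpleRing A ↔
      ∃ e : A ⊗[k] A, LinearMap.mul' k A e = 1 ∧
        ∀ a : A, (a ⊗ₜ[k] (1 : A)) * e = e * ((1 : A) ⊗ₜ[k] a)) ∧
    (IsSemisimpleRing A ↔ IsSemisimpleRing (A ⊗[k] Aᵐᵒᵖ)) := by
  have h12 : IsSemisimpleRing A → IsSemisimpleRing (A ⊗[k] Aᵐᵒᵖ) := fun _ => ss_env k A
  have h23 : IsSemisimpleRing (A ⊗[k] Aᵐᵒᵖ) → ∃ e, IsSepElt k A e := fun _ => sep_of_env k A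
  have h31 : (∃ e, IsSepElt k A e) → IsSemisimpleRing A := fun ⟨e, he⟩ => ss_of_sep k A e he
  refine ⟨⟨fun h => ?_, ?_⟩, ⟨fun h => h23 (h12 h), h31⟩, ⟨h12, fun h => h31 (h23 h)⟩⟩
  · obtain ⟨e, he1, he2⟩ := h23 (h12 h)
    let Δ : A →ₗ[k] A ⊗[k] A :=
      LinearMap.mulRight k e ∘ₗ (TensorProduct.mk k A A).flip 1
    have hΔ : ∀ a, Δ a = (a ⊗ₜ 1) * e := fun a => rfl
    have hm : ∀ a t, LinearMap.mul' k A ((a ⊗ₜ 1) * t) = a * LinearMap.mul' k A t := by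
      intro a t
      induction t using TensorProduct.induction_on with
      | zero => simp
      | tmul x y => simp [Algebra.TensorProduct.tmul_mul_tmul, mul_assoc]
      | add x y hx hy => simp [mul_add, hx, hy]
    refine ⟨Δ, fun a b => ⟨?_, ?_⟩, ?_⟩
    · rw [hΔ, hΔ, ← mul_assoc, Algebra.TensorProduct.tmul_mul_tmul, one_mul]
    · rw [hΔ, hΔ, mul_assoc, ← he2, ← mul_assoc, Algebra.TensorProduct.tmul_mul_tmul, one_mul]
    · ext a
      rw [LinearMap.comp_apply, hΔ, hm, he1, mul_one, LinearMap.id_apply]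
  · rintro ⟨Δ, hΔ, h1⟩
    refine h31 ⟨Δ 1, LinearMap.congr_fun h1 1, fun a => ?_⟩
    rw [← (hΔ a 1).1, ← (hΔ 1 a).2, mul_one, one_mul]
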